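/- arXiv:1802.08180 — 5 statements merged into one kernel-verified Lean document; each statement's English description precedes it below -/
import Mathlib

section
/- Let (V, K, η) be a para-Hermitian vector space with projections P±, let B : V → V be an η-skew linear map with image in E₋ and vanishing on E₋, and let b₊ be the bilinear form on E₊ given by b₊(x, y) := η(B x, y). Define ρ₊ : V → E₊ × (E₊)* by ρ₊(X) := (P₊X, η(P₋X, ·)|_{E₊}), and define the b-field transformation e^{b₊} : E₊ × (E₊)* → E₊ × (E₊)* by e^{b₊}(x, ξ) := (x, ξ + b₊(x, ·)). Then ρ₊ ∘ (id + B) = e^{b₊} ∘ ρ₊, i.e. the B-transformation of V corresponds under ρ₊ to the b-field transformation of E₊ × (E₊)*. -/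
open Module

/-- Under the isomorphism `ρ₊ : X ↦ (P₊X, η(P₋X, ·)|_{E₊})`, the B-transformation
`id + B` of `V` corresponds to the b-field transformation
`e^{b₊}(x, ξ) = (x, ξ + b₊(x, ·))` of `E₊ × (E₊)*`, i.e. `ρ₊ ∘ (id + B) = e^{b₊} ∘ ρ₊`,
stated componentwise: the first components agree and the functionals on
`E₊ = {y | K y = y}` agree. -/
theorem stmt11 {V : Type*} [AddCommGroup V] [Module ℝ V] [FiniteDimensional ℝ V]
    (K : V →ₗ[ℝ] V) (hK : ∀ v, K (K v) = v)
    (heig : finrank ℝ (Module.End.eigenspace K 1) = finrank ℝ (Module.End.eigenspace K (-1)))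
    (η : LinearMap.BilinForm ℝ V)
    (hsymm : ∀ u v, η u v = η v u)
    (hnondeg : ∀ u, (∀ v, η u v = 0) → u = 0)
    (hanti : ∀ u v, η (K u) (K v) = - η u v)
    (B : V →ₗ[ℝ] V)
    (hBrange : ∀ u, K (B u) = - B u)
    (hBvanish : ∀ u, K u = - u → B u = 0)
    (hBskew : ∀ u v, η (B u) v = - η u (B v)) :
    ∀ X : V,
      ((1/2 : ℝ) • ((X + B X) + K (X + B X)) = (1/2 : ℝ) • (X + K X)) ∧
      (∀ y : V, K y = y →
        η ((1/2 : ℝ) • ((X + B X) - K (X + B X))) y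
          = η ((1/2 : ℝ) • (X - K X)) y + η (B ((1/2 : ℝ) • (X + K X))) y) := by
  intro X
  have hBK : B (K X) = B X := by
    have h := hBvanish (X - K X) (by rw [map_sub, hK]; abel)
    rw [map_sub, sub_eq_zero] at h
    exact h.symm
  refine ⟨by rw [map_add, hBrange]; congr 1; abel, fun y _ => ?_⟩
  rw [← LinearMap.add_apply, ← map_add]
  congr 2
  rw [map_smul, map_add, map_add, hBrange, hBK, ← smul_add]
  congr 1
  abel
end

section
/- On ℝⁿ let ∇ be the torsion-free affine connection determined by a symmetric Christoffel map Γ. For all vector fields X, Y, Z : ℝⁿ → ℝⁿ and one-forms α, β, γ : ℝⁿ → (ℝⁿ →L ℝ) differentiable at a point p, the Dorfman bracket satisfies ⟨⟦(X, α), (Y, β)⟧, (Z, γ)⟩(p) = ⟨(∇_{X(p)}Y, ∇_{X(p)}β)(p) − (∇_{Y(p)}X, ∇_{Y(p)}α)(p), (Z(p), γ(p))⟩ + ⟨(∇_{Z(p)}X, ∇_{Z(p)}α)(p), (Y(p), β(p))⟩, where the pairing of elements of ℝⁿ × (ℝⁿ)* is ⟨(v, ξ), (w, ζ)⟩ :=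 ξ(w) + ζ(v). In particular the right-hand side is independent of the choice of symmetric Γ. -/
/-- On `ℝⁿ`, for any torsion-free affine connection `∇` given by a symmetric Christoffel
map `Γ`, the Dorfman bracket paired against `(Z, γ)` is expressed by the connection
formula `⟨∇_X e₂ − ∇_Y e₁, e₃⟩ + ⟨∇_Z e₁, e₂⟩`; in particular the right-hand side is
independent of the choice of symmetric `Γ`. -/
theorem stmt12 (n : ℕ)
    (Γ : (Fin n → ℝ) → ((Fin n → ℝ) →L[ℝ] (Fin n → ℝ) →L[ℝ] (Fin n → ℝ)))
    (hΓ : ∀ p u v, Γ p u v = Γ p v u)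
    (X Y Z : (Fin n → ℝ) → (Fin n → ℝ))
    (α β γ : (Fin n → ℝ) → ((Fin n → ℝ) →L[ℝ] ℝ))
    (p : Fin n → ℝ)
    (hX : DifferentiableAt ℝ X p) (hY : DifferentiableAt ℝ Y p)
    (hZ : DifferentiableAt ℝ Z p)
    (hα : DifferentiableAt ℝ α p) (hβ : DifferentiableAt ℝ β p)
    (hγ : DifferentiableAt ℝ γ p) :
    -- pairing of the Dorfman bracket ⟦(X, α), (Y, β)⟧ with (Z, γ) at p
    ((fderiv ℝ β p (X p) + (β p).comp (fderiv ℝ X p))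
        - (fderiv ℝ α p (Y p) + (α p).comp (fderiv ℝ Y p))
        + fderiv ℝ (fun q => α q (Y q)) p) (Z p)
      + γ p (fderiv ℝ Y p (X p) - fderiv ℝ X p (Y p))
    = -- ⟨(∇_{X(p)}Y − ∇_{Y(p)}X, ∇_{X(p)}β − ∇_{Y(p)}α), (Z(p), γ(p))⟩
      ((fderiv ℝ β p (X p) - (β p).comp (Γ p (X p)))
          - (fderiv ℝ α p (Y p) - (α p).comp (Γ p (Y p)))) (Z p)
      + γ p ((fderiv ℝ Y p (X p) + Γ p (X p) (Y p))
          - (fderiv ℝ X p (Y p) + Γ p (Y p) (X p)))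
      -- + ⟨(∇_{Z(p)}X, ∇_{Z(p)}α), (Y(p), β(p))⟩
      + ((fderiv ℝ α p (Z p) - (α p).comp (Γ p (Z p))) (Y p)
          + β p (fderiv ℝ X p (Z p) + Γ p (Z p) (X p))) := by
  rw [fderiv_clm_apply hα hY, hΓ p (Y p) (X p)]
  simp only [add_apply, sub_apply,
    ContinuousLinearMap.comp_apply, ContinuousLinearMap.flip_apply, map_add, map_sub,
    hΓ p (Z p)]
  ring
end

section
/- In the flat para-Hermitian model V = ℝⁿ × ℝⁿ, let X, Y : V → V be vector fields differentiable at p whose values all lie in E₊ = ℝⁿ × {0}. Then ⟦X, Y⟧ᴰ(p) ∈ E₊. Likewise, if all values of X and Y lie in E₋ = {0} × ℝⁿ, then ⟦X, Y⟧ᴰ(p) ∈ E₋. (The eigenbundles of K are weakly integrable, i.e. involutive under the D-bracket of K.) -/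
/-- Dot product on `ℝⁿ`. -/
def flatDot (n : ℕ) (u v : Fin n → ℝ) : ℝ := ∑ i, u i * v i

/-- The split-signature metric `η((x, x̃), (y, ỹ)) = x̃·y + x·ỹ` of the flat
para-Hermitian model `V = ℝⁿ × ℝⁿ`. -/
def flatEta (n : ℕ) (w w' : (Fin n → ℝ) × (Fin n → ℝ)) : ℝ :=
  flatDot n w.2 w'.1 + flatDot n w.1 w'.2

theorem fderiv_apply_snd_eq_zero {E F G : Type*} [NormedAddCommGroup E] [NormedSpace ℝ E]
    [NormedAddCommGroup F] [NormedSpace ℝ F] [NormedAddCommGroup G] [NormedSpace ℝ G]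
    {f : E → F × G} {p : E} (hf : DifferentiableAt ℝ f p) (h : ∀ q, (f q).2 = 0) (w : E) :
    (fderiv ℝ f p w).2 = 0 := by
  have h' := hf.hasFDerivAt.snd
  simp only [h] at h'
  exact DFunLike.congr_fun (h'.unique (hasFDerivAt_const 0 p)) w

theorem fderiv_apply_fst_eq_zero {E F G : Type*} [NormedAddCommGroup E] [NormedSpace ℝ E]
    [NormedAddCommGroup F] [NormedSpace ℝ F] [NormedAddCommGroup G] [NormedSpace ℝ G]
    {f : E → F × G} {p : E} (hf : DifferentiableAt ℝ f p) (h : ∀ q, (f q).1 = 0) (w : E) :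
    (fderiv ℝ f p w).1 = 0 := by
  have h' := hf.hasFDerivAt.fst
  simp only [h] at h'
  exact DFunLike.congr_fun (h'.unique (hasFDerivAt_const 0 p)) w

/-- In the flat para-Hermitian model the eigenbundles `E₊ = ℝⁿ × {0}` and
`E₋ = {0} × ℝⁿ` are weakly integrable: the D-bracket (characterized against `η`)
of vector fields valued in `E₊` (resp. `E₋`) again lies in `E₊` (resp. `E₋`). -/
theorem stmt14 (n : ℕ)
    (X Y : (Fin n → ℝ) × (Fin n → ℝ) → (Fin n → ℝ) × (Fin n → ℝ))
    (p : (Fin n → ℝ) × (Fin n → ℝ))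
    (hX : DifferentiableAt ℝ X p) (hY : DifferentiableAt ℝ Y p) :
    ((∀ q, (X q).2 = 0) → (∀ q, (Y q).2 = 0) →
      ∃ ξ : (Fin n → ℝ) × (Fin n → ℝ),
        (∀ w, flatEta n ξ w
          = flatEta n (fderiv ℝ Y p (X p) - fderiv ℝ X p (Y p)) w
            + flatEta n (fderiv ℝ X p w) (Y p)) ∧ ξ.2 = 0) ∧
    ((∀ q, (X q).1 = 0) → (∀ q, (Y q).1 = 0) →
      ∃ ξ : (Fin n → ℝ) × (Fin n → ℝ),
        (∀ w, flatEta n ξ w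
          = flatEta n (fderiv ℝ Y p (X p) - fderiv ℝ X p (Y p)) w
            + flatEta n (fderiv ℝ X p w) (Y p)) ∧ ξ.1 = 0) := by
  refine ⟨fun hX' hY' => ⟨fderiv ℝ Y p (X p) - fderiv ℝ X p (Y p), fun w => ?_, ?_⟩,
    fun hX' hY' => ⟨fderiv ℝ Y p (X p) - fderiv ℝ X p (Y p), fun w => ?_, ?_⟩⟩
  · have h : flatEta n (fderiv ℝ X p w) (Y p) = 0 := by
      simp [flatEta, flatDot, fderiv_apply_snd_eq_zero hX hX', hY']
    rw [h, add_zero]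
  · simp [fderiv_apply_snd_eq_zero hX hX', fderiv_apply_snd_eq_zero hY hY']
  · have h : flatEta n (fderiv ℝ X p w) (Y p) = 0 := by
      simp [flatEta, flatDot, fderiv_apply_fst_eq_zero hX hX', hY']
    rw [h, add_zero]
  · simp [fderiv_apply_fst_eq_zero hX hX', fderiv_apply_fst_eq_zero hY hY']
end

section
/- In the flat para-Hermitian model V = ℝⁿ × ℝⁿ with a differentiable B-field B : V → L(ℝⁿ, ℝⁿ) (each B_q skew for the dot product), let X, Y : V → V be vector fields differentiable at p, and let z ∈ ℝⁿ. Writing x := X₊(p) and y := Y₊(p) for the first components, the flat D-bracket of the deformed projections satisfies: η(⟦P₊ᴮX, P₊ᴮY⟧ᴰ(p), (z, B_p z)) = (∂_{(x, B_p x)} b)(y, z) + (∂_{(y, B_p y)} b)(z, x) + (∂_{(z, B_p z)} b)(x, y), where (∂_h b)(u, w) denotes the Fréchet derivative at p, in the direction h ∈ V, of the function q ↦ B_q u · w. -/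
lemma flatDot_add_left (n : ℕ) (u v w : Fin n → ℝ) :
    flatDot n (u + v) w = flatDot n u w + flatDot n v w := by
  simp [flatDot, add_mul, Finset.sum_add_distrib]

lemma flatDot_sub_left (n : ℕ) (u v w : Fin n → ℝ) :
    flatDot n (u - v) w = flatDot n u w - flatDot n v w := by
  simp [flatDot, sub_mul, Finset.sum_sub_distrib]

lemma flatDot_comm (n : ℕ) (u v : Fin n → ℝ) : flatDot n u v = flatDot n v u := by
  simp [flatDot, mul_comm]

lemma flatEta_sub_left (n : ℕ) (u v w : (Fin n → ℝ) × (Fin n → ℝ)) :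
    flatEta n (u - v) w = flatEta n u w - flatEta n v w := by
  simp only [flatEta, Prod.fst_sub, Prod.snd_sub, flatDot_sub_left]
  ring

/-- The derivative of `q ↦ B_q u · w` is `h ↦ (∂_h B) u · w`. -/
lemma fderiv_flatDot_apply {E : Type*} [NormedAddCommGroup E] [NormedSpace ℝ E] (n : ℕ)
    {B : E → ((Fin n → ℝ) →L[ℝ] (Fin n → ℝ))} {p : E} (hB : DifferentiableAt ℝ B p)
    (u w : Fin n → ℝ) (h : E) :
    fderiv ℝ (fun q => flatDot n (B q u) w) p h = flatDot n (fderiv ℝ B p h u) w := by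
  have hBu : HasFDerivAt (fun q => B q u) ((fderiv ℝ B p).flip u) p := by
    simpa using hB.hasFDerivAt.clm_apply (hasFDerivAt_const u p)
  have hdot : HasFDerivAt (fun q => flatDot n (B q u) w)
      (∑ i, w i • (ContinuousLinearMap.proj i).comp ((fderiv ℝ B p).flip u)) p :=
    HasFDerivAt.fun_sum fun i _ => (hasFDerivAt_pi'.1 hBu i).mul_const (w i)
  rw [hdot.fderiv]
  simp [flatDot, mul_comm]

/-- The derivative of a section `q ↦ (f q, B_q (f q))` of the deformed eigenbundle, paired with
an element `(w, B_p w)` of its fibre, only sees the derivative of `B`, because the fibre is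
isotropic. -/
lemma flatEta_fderiv_graph {E : Type*} [NormedAddCommGroup E] [NormedSpace ℝ E] (n : ℕ)
    {B : E → ((Fin n → ℝ) →L[ℝ] (Fin n → ℝ))} {p : E}
    (hBskew : ∀ u v, flatDot n (B p u) v = - flatDot n u (B p v))
    (hB : DifferentiableAt ℝ B p) {f : E → Fin n → ℝ} (hf : DifferentiableAt ℝ f p)
    (h : E) (w : Fin n → ℝ) :
    flatEta n (fderiv ℝ (fun q => (f q, B q (f q))) p h) (w, B p w)
      = flatDot n (fderiv ℝ B p h (f p)) w := by
  rw [(hf.hasFDerivAt.prodMk (hB.hasFDerivAt.clm_apply hf.hasFDerivAt)).fderiv]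
  simp [flatEta, flatDot_add_left, hBskew]

/-- In the flat para-Hermitian model with a B-field, the D-bracket of the deformed
projections paired against `(z, B_p z)` is the cyclic sum of derivatives of the
two-form `b_q(u, w) = B_q u · w`. -/
theorem stmt15 (n : ℕ)
    (B : (Fin n → ℝ) × (Fin n → ℝ) → ((Fin n → ℝ) →L[ℝ] (Fin n → ℝ)))
    (hBskew : ∀ q u v, flatDot n (B q u) v = - flatDot n u (B q v))
    (hB : Differentiable ℝ B)
    (X Y : (Fin n → ℝ) × (Fin n → ℝ) → (Fin n → ℝ) × (Fin n → ℝ))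
    (p : (Fin n → ℝ) × (Fin n → ℝ))
    (hX : DifferentiableAt ℝ X p) (hY : DifferentiableAt ℝ Y p)
    (z : Fin n → ℝ) :
    let PBX : (Fin n → ℝ) × (Fin n → ℝ) → (Fin n → ℝ) × (Fin n → ℝ) :=
      fun q => ((X q).1, B q ((X q).1))
    let PBY : (Fin n → ℝ) × (Fin n → ℝ) → (Fin n → ℝ) × (Fin n → ℝ) :=
      fun q => ((Y q).1, B q ((Y q).1))
    let x := (X p).1
    let y := (Y p).1
    flatEta n (fderiv ℝ PBY p (PBX p) - fderiv ℝ PBX p (PBY p)) (z, B p z)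
        + flatEta n (fderiv ℝ PBX p (z, B p z)) (PBY p)
      = fderiv ℝ (fun q => flatDot n (B q y) z) p (x, B p x)
        + fderiv ℝ (fun q => flatDot n (B q z) x) p (y, B p y)
        + fderiv ℝ (fun q => flatDot n (B q x) y) p (z, B p z) := by
  intro PBX PBY x y
  have hskew : fderiv ℝ (fun q => flatDot n (B q z) x) p (y, B p y)
      = - flatDot n (fderiv ℝ B p (y, B p y) x) z := by
    have hfun : (fun q => flatDot n (B q z) x) = fun q => -flatDot n (B q x) z := by
      funext q
      rw [hBskew, flatDot_comm]
    rw [hfun, fderiv_fun_neg, neg_apply, fderiv_flatDot_apply n (hB p)]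
  rw [hskew, fderiv_flatDot_apply n (hB p), fderiv_flatDot_apply n (hB p), flatEta_sub_left,
    flatEta_fderiv_graph n (hBskew p) (hB p) hY.fst,
    flatEta_fderiv_graph n (hBskew p) (hB p) hX.fst,
    flatEta_fderiv_graph n (hBskew p) (hB p) hX.fst]
  ring
end

section
/- Let η be a (constant) nondegenerate symmetric bilinear form on ℝ^{2n} and K : ℝ^{2n} → L(ℝ^{2n}, ℝ^{2n}) a field of endomorphisms with K_q ∘ K_q = id and η(K_q u, K_q v) = −η(u, v) for all q, u, v, so that (K, η) is an almost para-Hermitian structure on ℝ^{2n} whose underlying metric is flat (Levi-Civita connection = Fréchet derivative D). Let Y : ℝ^{2n} → ℝ^{2n} be a vector field, assume K and Y are differentiable at p, and let v ∈ ℝ^{2n}. Then there is a unique vector (∇ᶜ_v Y)(p) satisfying the contorsion formula η((∇ᶜ_v Y)(p), z) = η(DY_p(v), z) − (1/2)·η((DK_p(v))(Y(p)), K_p z) for all z ∈ ℝ^{2n}, and it is given by (∇ᶜ_v Y)(p) = P₊(p)(D(P₊Y)_p(v)) + P₋(p)(D(P₋Y)_p(v)) = DY_p(v) + (1/2)·K_p((DK_p(v))(Y(p))),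 where (P± Y)(q) := (1/2)(Y(q) ± K_q(Y(q))) and P±(p) := (1/2)(id ± K_p). -/
/-- The canonical connection of an almost para-Hermitian structure `(K, η)` on `ℝ²ⁿ`
with flat underlying metric (Levi-Civita connection = Fréchet derivative): there is a
unique vector `(∇ᶜ_v Y)(p)` satisfying the contorsion formula
`η(∇ᶜ_v Y, z) = η(DY_p v, z) − ½ η((DK_p v)(Y p), K_p z)`, and it is given by
`P₊(p)(D(P₊Y)_p v) + P₋(p)(D(P₋Y)_p v) = DY_p v + ½ K_p((DK_p v)(Y p))`. -/
theorem stmt17 (n : ℕ)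
    (η : LinearMap.BilinForm ℝ (Fin (2 * n) → ℝ))
    (hsymm : ∀ u v, η u v = η v u)
    (hnondeg : ∀ u, (∀ v, η u v = 0) → u = 0)
    (K : (Fin (2 * n) → ℝ) → ((Fin (2 * n) → ℝ) →L[ℝ] (Fin (2 * n) → ℝ)))
    (hK : ∀ q u, K q (K q u) = u)
    (hanti : ∀ q u v, η (K q u) (K q v) = - η u v)
    (Y : (Fin (2 * n) → ℝ) → (Fin (2 * n) → ℝ))
    (p : Fin (2 * n) → ℝ)
    (hKd : DifferentiableAt ℝ K p) (hY : DifferentiableAt ℝ Y p)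
    (v : Fin (2 * n) → ℝ) :
    let cand : Fin (2 * n) → ℝ :=
      fderiv ℝ Y p v + (1/2 : ℝ) • K p ((fderiv ℝ K p v) (Y p))
    -- `cand` satisfies the contorsion formula ...
    (∀ z, η cand z
        = η (fderiv ℝ Y p v) z - (1/2) * η ((fderiv ℝ K p v) (Y p)) (K p z)) ∧
    -- ... it is the unique such vector ...
    (∀ ξ : Fin (2 * n) → ℝ,
      (∀ z, η ξ z
        = η (fderiv ℝ Y p v) z - (1/2) * η ((fderiv ℝ K p v) (Y p)) (K p z)) → ξ = cand) ∧
    -- ... and it agrees with the projected formula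
    cand = (1/2 : ℝ) • ((fderiv ℝ (fun q => (1/2 : ℝ) • (Y q + K q (Y q))) p v)
            + K p (fderiv ℝ (fun q => (1/2 : ℝ) • (Y q + K q (Y q))) p v))
        + (1/2 : ℝ) • ((fderiv ℝ (fun q => (1/2 : ℝ) • (Y q - K q (Y q))) p v)
            - K p (fderiv ℝ (fun q => (1/2 : ℝ) • (Y q - K q (Y q))) p v)) := by
  intro cand
  have hcand : ∀ z, η cand z
      = η (fderiv ℝ Y p v) z - (1/2) * η ((fderiv ℝ K p v) (Y p)) (K p z) := by
    intro z
    have h := hanti p ((fderiv ℝ K p v) (Y p)) (K p z)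
    rw [hK] at h
    simp only [cand, map_add, map_smul, LinearMap.add_apply, LinearMap.smul_apply, smul_eq_mul, h]
    ring
  refine ⟨hcand, fun ξ hξ => ?_, ?_⟩
  · refine sub_eq_zero.mp (hnondeg _ fun z => ?_)
    rw [map_sub, LinearMap.sub_apply, hξ, hcand, sub_self]
  · have hKY : HasFDerivAt (fun q => K q (Y q)) _ p := hKd.hasFDerivAt.clm_apply hY.hasFDerivAt
    rw [((hY.hasFDerivAt.fun_add hKY).fun_const_smul (1/2 : ℝ)).fderiv,
      ((hY.hasFDerivAt.fun_sub hKY).fun_const_smul (1/2 : ℝ)).fderiv]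
    simp only [cand, add_apply, sub_apply,
      smul_apply, ContinuousLinearMap.comp_apply,
      ContinuousLinearMap.flip_apply, map_add, map_sub, map_smul, hK]
    module
end
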